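/- arXiv:1703.07979 — 2 statements merged into one kernel-verified Lean document; each statement's English description precedes it below -/
import Mathlib

section
/- Let n and s be positive integers, 0 < μ < 1 and ζ > 1. Then ∫_0^1 x^{-μ} (1-x)^s/(ζ^{-1} + x)^n dx = Σ_{k=0}^{∞} binom(-n, k) ζ^{-k} Σ_{l=0}^{s} (-1)^l s!/(l! (s-l)! (l-n-k-μ+1)) + (-1)^{n-1} (π s!/sin(πμ)) Σ_{k=0}^{n-1} (-1)^k (μ)_k (1 + ζ^{-1})^{s-n+k+1} ζ^{k+μ}/(k! (s-n+k+1)! (n-k-1)!), where (μ)_k = μ(μ+1)⋯(μ+k-1) is the Pochhammer symbol ((μ)_0 = 1), any term with a negative factorial argument is set to zero, and the infinite series converges. -/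
open Filter MeasureTheory Set

lemma intervalIntegrable_rpow_div_add_pow {p a : ℝ} (hp : -1 < p) (ha : 0 < a) (m : ℕ) :
    IntervalIntegrable (fun x : ℝ => x ^ p / (a + x) ^ m) volume 0 1 := by
  simp_rw [div_eq_mul_inv]
  refine (intervalIntegral.intervalIntegrable_rpow' hp).mul_continuousOn ?_
  refine ContinuousOn.inv₀ (by fun_prop) fun x hx => ?_
  rw [uIcc_of_le zero_le_one] at hx
  have : 0 < a + x := by linarith [hx.1]
  positivity

/-- Raising the exponent of `x` by one. -/
lemma integral_rpow_add_one_div_add {p a : ℝ} (hp : -1 < p) (ha : 0 < a) :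
    ∫ x in (0 : ℝ)..1, x ^ (p + 1) / (a + x) ^ 1 =
      1 / (p + 1) - a * ∫ x in (0 : ℝ)..1, x ^ p / (a + x) ^ 1 := by
  have h1 : ∫ x in (0 : ℝ)..1, x ^ p = 1 / (p + 1) := by
    rw [integral_rpow (Or.inl hp), Real.one_rpow, Real.zero_rpow (by linarith), sub_zero]
  rw [← h1, ← intervalIntegral.integral_const_mul, ← intervalIntegral.integral_sub
    (intervalIntegral.intervalIntegrable_rpow' hp)
    ((intervalIntegrable_rpow_div_add_pow hp ha 1).const_mul a)]
  refine intervalIntegral.integral_congr_ae (Eventually.of_forall fun x hx => ?_)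
  rw [uIoc_of_le zero_le_one] at hx
  have hx0 : 0 < x := hx.1
  have : 0 < a + x := by linarith
  rw [Real.rpow_add_one hx0.ne']
  field_simp
  ring

/-- Raising the exponent of `a + x` by one, by integration by parts. -/
lemma integral_rpow_div_add_pow_succ {p a : ℝ} (hp : -1 < p) (ha : 0 < a) (m : ℕ) :
    (m + 1) * a * ∫ x in (0 : ℝ)..1, x ^ p / (a + x) ^ (m + 2) =
      1 / (1 + a) ^ (m + 1) - (p - m) * ∫ x in (0 : ℝ)..1, x ^ p / (a + x) ^ (m + 1) := by
  have i1 := (intervalIntegrable_rpow_div_add_pow hp ha (m + 1)).const_mul (p - m)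
  have i2 := (intervalIntegrable_rpow_div_add_pow hp ha (m + 2)).const_mul ((m + 1) * a)
  have key := intervalIntegral.integral_eq_sub_of_hasDerivAt_of_le (a := (0 : ℝ)) (b := 1)
    (f := fun x : ℝ => x ^ (p + 1) / (a + x) ^ (m + 1)) zero_le_one ?_ ?_ (i1.add i2)
  · rw [intervalIntegral.integral_add i1 i2, intervalIntegral.integral_const_mul,
      intervalIntegral.integral_const_mul, Real.one_rpow, Real.zero_rpow (by linarith)] at key
    rw [add_comm 1 a]
    linear_combination key
  · refine ContinuousOn.div (ContinuousOn.rpow_const continuousOn_id fun x _ =>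
      Or.inr (by linarith)) (by fun_prop) fun x hx => ?_
    have : 0 < a + x := by linarith [hx.1]
    positivity
  · intro x hx
    have hx0 : 0 < x := hx.1
    have hax : 0 < a + x := by linarith
    have d1 := Real.hasDerivAt_rpow_const (x := x) (p := p + 1) (Or.inl hx0.ne')
    have d2 := ((hasDerivAt_id x).const_add a).pow (m + 1)
    refine (d1.div d2 (pow_pos hax _).ne').congr_deriv ?_
    simp only [id, add_sub_cancel_right, Real.rpow_add_one hx0.ne', Pi.pow_apply]
    push_cast
    field_simp
    ring

/-- The series obtained by expanding `(a + x)⁻¹ ^ (m + 1)` at infinity and integrating termwise. -/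
lemma hasSum_choose_mul_pow_div_succ {a q T : ℝ} (ha0 : 0 < a) (ha1 : a < 1) (m : ℕ)
    (hq : ∀ k : ℕ, q ≠ k)
    (h : HasSum (fun k : ℕ => (-1 : ℝ) ^ k * (Nat.choose (m + k) k : ℝ) * a ^ k / (q - k)) T) :
    HasSum (fun k : ℕ =>
        (-1 : ℝ) ^ k * (Nat.choose (m + 1 + k) k : ℝ) * a ^ k / (q - 1 - k))
      ((1 / (1 + a) ^ (m + 1) - q * T) / ((m + 1) * a)) := by
  have hg := hasSum_choose_mul_geometric_of_norm_lt_one m (r := -a)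
    (by rw [norm_neg, Real.norm_of_nonneg ha0.le]; exact ha1)
  rw [sub_neg_eq_add] at hg
  have h2 := hg.sub (h.mul_left q)
  rw [← hasSum_nat_add_iff' 1] at h2
  have hq0 : q ≠ 0 := by simpa using hq 0
  simp only [Finset.sum_range_one] at h2
  have h3 := h2.div_const ((m + 1) * a)
  convert! h3 using 1
  · funext k
    have hqk : q - (k + 1 : ℝ) ≠ 0 := sub_ne_zero.2 (by exact_mod_cast hq (k + 1))
    have hqk' : q - 1 - (k : ℝ) ≠ 0 := by convert hqk using 1; ring
    have hc : ((m + 1 + k).choose k : ℝ) * (m + 1) = (m + (k + 1)).choose (k + 1) * (k + 1) := by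
      have := Nat.choose_succ_right_eq (m + (k + 1)) k
      have e : m + (k + 1) - k = m + 1 := by omega
      rw [e] at this
      rw [show m + 1 + k = m + (k + 1) by ring]
      exact_mod_cast this.symm
    have hsym : ((k + 1 + m).choose m : ℝ) = (m + (k + 1)).choose (k + 1) := by
      rw [add_comm (k + 1) m, Nat.choose_symm_add]
    rw [hsym]
    push_cast
    rw [neg_pow a]
    have hm : (m : ℝ) + 1 ≠ 0 := by positivity
    rw [div_eq_div_iff hqk' (by positivity)]
    field_simp
    linear_combination a * a ^ k * (-1) ^ k * (q - 1 - k) * hc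
  · simp [hq0]

lemma hasSum_neg_one_pow_mul_pow_div_add_one {a q T : ℝ}
    (h : HasSum (fun k : ℕ => (-1 : ℝ) ^ k * a ^ k / (q - k)) T) :
    HasSum (fun k : ℕ => (-1 : ℝ) ^ k * a ^ k / (q + 1 - k)) (1 / (q + 1) - a * T) := by
  rw [← hasSum_nat_add_iff' 1]
  convert! h.mul_left (-a) using 1
  · funext k
    push_cast
    rw [add_sub_add_right_eq_sub]
    ring
  · simp

lemma integral_rpow_mul_one_sub_rpow {u v : ℝ} (hu : 0 < u) (hv : 0 < v) :
    ∫ x in (0 : ℝ)..1, x ^ (u - 1) * (1 - x) ^ (v - 1) =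
      Real.Gamma u * Real.Gamma v / Real.Gamma (u + v) := by
  have h := Complex.betaIntegral_eq_Gamma_mul_div (u : ℂ) (v : ℂ) (by simpa) (by simpa)
  rw [← Complex.ofReal_add, Complex.Gamma_ofReal, Complex.Gamma_ofReal, Complex.Gamma_ofReal] at h
  apply Complex.ofReal_injective
  push_cast
  rw [← h, Complex.betaIntegral, ← intervalIntegral.integral_ofReal]
  refine intervalIntegral.integral_congr fun x hx => ?_
  rw [uIcc_of_le zero_le_one] at hx
  push_cast
  rw [Complex.ofReal_cpow hx.1, Complex.ofReal_cpow (by linarith [hx.2])]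
  push_cast
  rfl

lemma integral_Ioi_rpow_neg_div_add {μ a : ℝ} (hμ0 : 0 < μ) (hμ1 : μ < 1) (ha : 0 < a) :
    ∫ x in Ioi (0 : ℝ), x ^ (-μ) / (a + x) = Real.pi / Real.sin (Real.pi * μ) * a ^ (-μ) := by
  have hB := integral_rpow_mul_one_sub_rpow (u := 1 - μ) (v := μ) (by linarith) hμ0
  rw [sub_add_cancel, Real.Gamma_one, div_one, mul_comm (Real.Gamma _),
    Real.Gamma_mul_Gamma_one_sub, intervalIntegral.integral_of_le zero_le_one,
    integral_Ioc_eq_integral_Ioo] at hB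
  have him : (fun x : ℝ => x / (a + x)) '' Ioi 0 = Ioo 0 1 := by
    ext y
    constructor
    · rintro ⟨x, hx, rfl⟩
      have hx : 0 < x := hx
      exact ⟨by positivity, (div_lt_one (by positivity)).2 (by linarith)⟩
    · rintro ⟨h0, h1⟩
      have : 0 < 1 - y := by linarith
      refine ⟨a * y / (1 - y), by simp only [mem_Ioi]; positivity, ?_⟩
      simp only
      field_simp
      ring
  have hcov := integral_image_eq_integral_abs_deriv_smul (s := Ioi (0 : ℝ))
    (f := fun x : ℝ => x / (a + x)) (f' := fun x => a / (a + x) ^ 2) measurableSet_Ioi ?_ ?_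
    (fun x => x ^ (1 - μ - 1) * (1 - x) ^ (μ - 1))
  · rw [him, hB] at hcov
    rw [hcov, ← integral_mul_const]
    refine setIntegral_congr_fun measurableSet_Ioi fun x hx => ?_
    have hx : 0 < x := hx
    have hax : 0 < a + x := by positivity
    have e1 : 1 - x / (a + x) = a / (a + x) := by field_simp; ring
    simp only [smul_eq_mul]
    rw [e1, abs_of_pos (by positivity), Real.div_rpow hx.le hax.le, Real.div_rpow ha.le hax.le,
      show 1 - μ - 1 = -μ by ring, Real.rpow_sub_one ha.ne', Real.rpow_sub_one hax.ne',
      Real.rpow_neg ha.le, Real.rpow_neg hax.le]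
    have h1 : 0 < a ^ μ := Real.rpow_pos_of_pos ha _
    have h2 : 0 < (a + x) ^ μ := Real.rpow_pos_of_pos hax _
    field_simp
  · intro x hx
    have hx : 0 < x := hx
    have hax : a + x ≠ 0 := by positivity
    refine (((hasDerivAt_id x).div ((hasDerivAt_id x).const_add a) hax).congr_deriv
      ?_).hasDerivWithinAt
    simp
  · intro x hx y hy hxy
    have hx : 0 < x := hx
    have hy : 0 < y := hy
    simp only at hxy
    rw [div_eq_div_iff (by positivity) (by positivity)] at hxy
    have : a * (x - y) = 0 := by linear_combination hxy
    rcases mul_eq_zero.1 this with h | h <;> linarith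

lemma hasSum_integral_Ioi_one_rpow_neg_div_add {μ a : ℝ} (hμ0 : 0 < μ) (ha0 : 0 < a)
    (ha1 : a < 1) :
    HasSum (fun k : ℕ => (-1 : ℝ) ^ k * a ^ k / (μ + k))
      (∫ x in Ioi (1 : ℝ), x ^ (-μ) / (a + x)) := by
  have hexp (k : ℕ) : -μ - 1 - (k : ℝ) < -1 := by
    have : (0 : ℝ) ≤ k := k.cast_nonneg
    linarith
  have h_int (k : ℕ) : ∫ x in Ioi (1 : ℝ), x ^ (-μ - 1 - (k : ℝ)) = 1 / (μ + k) := by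
    rw [integral_Ioi_rpow_of_lt (hexp k) one_pos, Real.one_rpow, neg_div, ← div_neg]
    congr 1
    ring
  have h := hasSum_integral_of_summable_integral_norm (μ := volume.restrict (Ioi (1 : ℝ)))
    (F := fun (k : ℕ) (x : ℝ) => (-1 : ℝ) ^ k * a ^ k * x ^ (-μ - 1 - (k : ℝ)))
    (fun k => (integrableOn_Ioi_rpow_of_lt (hexp k) one_pos).const_mul _) ?_
  · convert! h using 1
    · funext k
      rw [integral_const_mul, h_int, mul_one_div]
    · refine setIntegral_congr_fun measurableSet_Ioi fun x hx => ?_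
      have hx1 : 1 < x := hx
      have hx0 : 0 < x := by linarith
      have hr : ‖-(a / x)‖ < 1 := by
        rw [norm_neg, Real.norm_of_nonneg (by positivity), div_lt_one hx0]
        linarith
      have hg := (hasSum_geometric_of_norm_lt_one hr).mul_left (x ^ (-μ - 1))
      have e : (fun k : ℕ => x ^ (-μ - 1) * (-(a / x)) ^ k) =
          fun k : ℕ => (-1 : ℝ) ^ k * a ^ k * x ^ (-μ - 1 - (k : ℝ)) := by
        funext k
        rw [Real.rpow_sub_natCast hx0.ne', neg_pow, div_pow]
        ring
      rw [e] at hg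
      rw [hg.tsum_eq, Real.rpow_sub_one hx0.ne', sub_neg_eq_add]
      have : 0 < a + x := by linarith
      field_simp
      ring
  · have e (k : ℕ) : ∫ x in Ioi (1 : ℝ), ‖(-1 : ℝ) ^ k * a ^ k * x ^ (-μ - 1 - (k : ℝ))‖ =
        a ^ k * (1 / (μ + k)) := by
      rw [← h_int, ← integral_const_mul]
      refine setIntegral_congr_fun measurableSet_Ioi fun x hx => ?_
      have hx0 : 0 < x := zero_lt_one.trans hx
      have : 0 < x ^ (-μ - 1 - (k : ℝ)) := Real.rpow_pos_of_pos hx0 _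
      simp only [norm_mul, norm_pow, norm_neg, norm_one, one_pow, one_mul]
      rw [Real.norm_of_nonneg ha0.le, Real.norm_of_nonneg this.le]
    simp_rw [e]
    refine Summable.of_nonneg_of_le (fun k => by positivity) (fun k => ?_)
      ((summable_geometric_of_lt_one ha0.le ha1).mul_right (1 / μ))
    gcongr
    linarith [(k.cast_nonneg : (0 : ℝ) ≤ k)]

/-- The case `l = 0`, `m = 0` of `hasSum_integral_rpow_div_add_pow`. -/
lemma hasSum_integral_rpow_neg_div_add {μ a : ℝ} (hμ0 : 0 < μ) (hμ1 : μ < 1) (ha0 : 0 < a)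
    (ha1 : a < 1) :
    HasSum (fun k : ℕ => (-1 : ℝ) ^ k * a ^ k / (-μ - k))
      ((∫ x in (0 : ℝ)..1, x ^ (-μ) / (a + x) ^ 1) -
        Real.pi / Real.sin (Real.pi * μ) * a ^ (-μ)) := by
  have hI := integral_Ioi_rpow_neg_div_add hμ0 hμ1 ha0
  have hsin : 0 < Real.sin (Real.pi * μ) :=
    Real.sin_pos_of_pos_of_lt_pi (by positivity) (by nlinarith [Real.pi_pos])
  have h_int : IntegrableOn (fun x : ℝ => x ^ (-μ) / (a + x)) (Ioi 0) := by
    apply Integrable.of_integral_ne_zero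
    rw [hI]
    have := Real.rpow_pos_of_pos ha0 (-μ)
    have := Real.pi_pos
    positivity
  have hsplit := setIntegral_union (Ioc_disjoint_Ioi_same (a := (0 : ℝ)) (b := 1))
    measurableSet_Ioi (h_int.mono_set Ioc_subset_Ioi_self)
    (h_int.mono_set (Ioi_subset_Ioi zero_le_one))
  rw [Ioc_union_Ioi_eq_Ioi zero_le_one, hI] at hsplit
  have h := (hasSum_integral_Ioi_one_rpow_neg_div_add hμ0 ha0 ha1).neg
  convert! h using 1
  · funext k
    rw [← div_neg]
    congr 1
    ring
  · simp_rw [pow_one]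
    rw [intervalIntegral.integral_of_le zero_le_one, hsplit]
    ring

lemma hasSum_integral_rpow_div_add_pow {μ a : ℝ} (hμ0 : 0 < μ) (hμ1 : μ < 1) (ha0 : 0 < a)
    (ha1 : a < 1) (l m : ℕ) :
    HasSum (fun k : ℕ =>
        (-1 : ℝ) ^ k * (Nat.choose (m + k) k : ℝ) * a ^ k / ((l : ℝ) - μ - m - k))
      ((∫ x in (0 : ℝ)..1, x ^ ((l : ℝ) - μ) / (a + x) ^ (m + 1)) -
        (-1) ^ l * (Real.pi / Real.sin (Real.pi * μ)) * a ^ ((l : ℝ) - μ - m) *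
          (∏ i ∈ Finset.range m, (μ - l + i)) / m.factorial) := by
  induction m with
  | zero =>
    suffices h : HasSum (fun k : ℕ => (-1 : ℝ) ^ k * a ^ k / ((l : ℝ) - μ - k))
        ((∫ x in (0 : ℝ)..1, x ^ ((l : ℝ) - μ) / (a + x) ^ 1) -
          (-1) ^ l * (Real.pi / Real.sin (Real.pi * μ)) * a ^ ((l : ℝ) - μ)) by
      simpa using h
    induction l with
    | zero => simpa using hasSum_integral_rpow_neg_div_add hμ0 hμ1 ha0 ha1
    | succ l ih =>
      have hl : (0 : ℝ) ≤ l := l.cast_nonneg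
      have h := hasSum_neg_one_pow_mul_pow_div_add_one ih
      have e : ((l + 1 : ℕ) : ℝ) - μ = (l : ℝ) - μ + 1 := by push_cast; ring
      rw [e, integral_rpow_add_one_div_add (by linarith) ha0, Real.rpow_add_one ha0.ne', pow_succ]
      convert! h using 1
      ring
  | succ m ih =>
    have hl : (0 : ℝ) ≤ l := l.cast_nonneg
    have hq (k : ℕ) : (l : ℝ) - μ - m ≠ k := by
      intro h
      have h1 : ((l : ℤ) : ℝ) - m - k = μ := by push_cast; linarith
      have h2 : (((l : ℤ) - m - k : ℤ) : ℝ) = μ := by push_cast at h1 ⊢; exact h1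
      rw [← h2] at hμ0 hμ1
      have h3 : (0 : ℤ) < (l : ℤ) - m - k := by exact_mod_cast hμ0
      have h4 : (l : ℤ) - m - k < 1 := by exact_mod_cast hμ1
      omega
    have h := hasSum_choose_mul_pow_div_succ ha0 ha1 m hq ih
    have hJ := integral_rpow_div_add_pow_succ (p := (l : ℝ) - μ) (by linarith) ha0 m
    convert! h using 1
    · funext k
      push_cast
      rw [sub_sub ((l : ℝ) - μ) m 1]
    · have hm : (m : ℝ) + 1 ≠ 0 := by positivity
      have hf : (m.factorial : ℝ) ≠ 0 := by positivity
      have hJ' : (∫ x in (0 : ℝ)..1, x ^ ((l : ℝ) - μ) / (a + x) ^ (m + 1 + 1)) =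
          (1 / (1 + a) ^ (m + 1) - ((l : ℝ) - μ - m) *
            ∫ x in (0 : ℝ)..1, x ^ ((l : ℝ) - μ) / (a + x) ^ (m + 1)) / ((m + 1) * a) := by
        rw [eq_div_iff (by positivity), ← hJ]
        ring
      have e : ((l : ℝ) - μ - (m + 1 : ℕ)) = (l : ℝ) - μ - m - 1 := by push_cast; ring
      rw [hJ', e, Real.rpow_sub_one ha0.ne', Finset.prod_range_succ, Nat.factorial_succ]
      push_cast
      field_simp
      ring

lemma sum_choose_mul_descFactorial_mul_pow (a : ℝ) {s j : ℕ} (hj : j ≤ s) :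
    ∑ l ∈ Finset.range (s + 1), (s.choose l : ℝ) * (l.descFactorial j : ℝ) * a ^ l =
      (s.descFactorial j : ℝ) * a ^ j * (1 + a) ^ (s - j) := by
  obtain ⟨t, rfl⟩ := Nat.exists_eq_add_of_le hj
  rw [add_assoc, Finset.sum_range_add, Finset.sum_eq_zero, zero_add, Nat.add_sub_cancel_left,
    add_comm 1 a, add_pow, Finset.mul_sum]
  · refine Finset.sum_congr rfl fun i hi => ?_
    have hi : i ≤ t := Nat.lt_succ_iff.1 (Finset.mem_range.1 hi)
    have h := Nat.choose_mul (n := j + t) (k := j + i) (s := j) (by omega)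
    rw [Nat.add_sub_cancel_left, Nat.add_sub_cancel_left] at h
    have h' : ((j + t).choose (j + i) : ℝ) * (j + i).choose j = (j + t).choose j * t.choose i := by
      exact_mod_cast h
    rw [Nat.descFactorial_eq_factorial_mul_choose, Nat.descFactorial_eq_factorial_mul_choose,
      one_pow, pow_add]
    push_cast
    linear_combination (j.factorial : ℝ) * a ^ j * a ^ i * h'
  · intro l hl
    rw [Nat.descFactorial_of_lt (Finset.mem_range.1 hl)]
    simp

lemma descPochhammer_smeval_eq_prod_range (x : ℝ) (m : ℕ) :
    (descPochhammer ℤ m).smeval x = ∏ i ∈ Finset.range m, (x - i) := by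
  rw [← descPochhammer_eval_eq_prod_range, ← descPochhammer_map (Int.castRingHom ℝ),
    Polynomial.eval_map, RingHom.ext_int (Int.castRingHom ℝ) RingHom.smulOneHom,
    Polynomial.eval₂_smulOneHom_eq_smeval]

lemma prod_range_sub_add_eq_sum (μ : ℝ) (l m : ℕ) :
    ∏ i ∈ Finset.range m, (μ - l + i) = (-1) ^ m * ∑ k ∈ Finset.range (m + 1),
      (m.choose k : ℝ) * ((-1) ^ k * ∏ i ∈ Finset.range k, (μ + (i : ℝ))) *
        (l.descFactorial (m - k) : ℝ) := by
  have hneg (x : ℝ) (k : ℕ) :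
      ∏ i ∈ Finset.range k, (x + i) = (-1) ^ k * ∏ i ∈ Finset.range k, (-x - i) := by
    have h := Finset.prod_const (s := Finset.range k) (-1 : ℝ)
    rw [Finset.card_range] at h
    rw [← h, ← Finset.prod_mul_distrib]
    exact Finset.prod_congr rfl fun i _ => by ring
  have h := Ring.descPochhammer_smeval_add (r := -μ) (s := (l : ℝ)) m (Commute.all _ _)
  rw [descPochhammer_smeval_eq_prod_range, Finset.Nat.sum_antidiagonal_eq_sum_range_succ_mk] at h
  rw [hneg, show -(μ - l) = -μ + (l : ℝ) by ring, h]
  congr 1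
  refine Finset.sum_congr rfl fun k _ => ?_
  rw [hneg μ k, ← mul_assoc ((-1 : ℝ) ^ k), ← mul_pow, neg_one_mul, neg_neg, one_pow, one_mul,
    descPochhammer_smeval_eq_prod_range, Polynomial.descPochhammer_smeval_eq_descFactorial,
    mul_assoc]

lemma sum_choose_mul_rpow_mul_prod {a : ℝ} (μ : ℝ) (ha : 0 < a) (s m : ℕ) :
    ∑ l ∈ Finset.range (s + 1), (s.choose l : ℝ) * (a ^ ((l : ℝ) - μ - m) *
        (∏ i ∈ Finset.range m, (μ - l + i)) / m.factorial) =
      (-1) ^ m * s.factorial * ∑ k ∈ Finset.range (m + 1),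
        (-1 : ℝ) ^ k * (∏ i ∈ Finset.range k, (μ + (i : ℝ))) *
          (1 + a) ^ ((s : ℤ) - m + k) * a⁻¹ ^ ((k : ℝ) + μ) /
          ((Nat.factorial k : ℝ) * Real.Gamma ((s : ℝ) - m + k + 1) *
            (Nat.factorial (m - k) : ℝ)) := by
  simp_rw [prod_range_sub_add_eq_sum, Finset.mul_sum, Finset.sum_div, Finset.mul_sum]
  rw [Finset.sum_comm]
  refine Finset.sum_congr rfl fun k hk => ?_
  have hk : k ≤ m := Nat.lt_succ_iff.1 (Finset.mem_range.1 hk)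
  obtain ⟨j, rfl⟩ := Nat.exists_eq_add_of_le hk
  rw [Nat.add_sub_cancel_left]
  set P := ∏ i ∈ Finset.range k, (μ + (i : ℝ))
  have hG : (s : ℝ) - (k + j : ℕ) + k + 1 = (s : ℝ) - j + 1 := by push_cast; ring
  rw [hG]
  rcases le_or_gt j s with hjs | hjs
  · have hz : (s : ℤ) - (k + j : ℕ) + k = (s - j : ℕ) := by push_cast [hjs]; ring
    rw [hz, zpow_natCast, ← Nat.cast_sub hjs, Real.Gamma_nat_eq_factorial, Real.inv_rpow ha.le,
      ← Real.rpow_neg ha.le]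
    have hsum := sum_choose_mul_descFactorial_mul_pow a hjs
    have hd : ((s - j).factorial : ℝ) * s.descFactorial j = s.factorial := by
      exact_mod_cast Nat.factorial_mul_descFactorial hjs
    have hch : ((k + j).choose k : ℝ) * k.factorial * j.factorial = (k + j).factorial := by
      have := Nat.choose_mul_factorial_mul_factorial (Nat.le_add_right k j)
      rw [Nat.add_sub_cancel_left] at this
      exact_mod_cast this
    have hpow (l : ℕ) : a ^ ((l : ℝ) - μ - (k + j : ℕ)) = a ^ l * a ^ (-(k + μ)) / a ^ j := by
      rw [← Real.rpow_natCast a l, ← Real.rpow_add ha, ← Real.rpow_natCast a j,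
        ← Real.rpow_sub ha]
      congr 1
      push_cast
      ring
    trans (-1) ^ (k + j) * ((-1) ^ k * P) * a ^ (-(k + μ)) / a ^ j *
      ((k + j).choose k / (k + j).factorial) *
      ∑ l ∈ Finset.range (s + 1), (s.choose l : ℝ) * (l.descFactorial j : ℝ) * a ^ l
    · rw [Finset.mul_sum]
      refine Finset.sum_congr rfl fun l _ => ?_
      rw [hpow]
      ring
    · have hc0 : ((k + j).choose k : ℝ) ≠ 0 := by
        exact_mod_cast (Nat.choose_pos (Nat.le_add_right k j)).ne'
      rw [hsum, ← hd, ← hch]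
      have := ha.ne'
      field_simp
  · obtain ⟨t, rfl⟩ := Nat.exists_eq_add_of_lt hjs
    have hΓ : (s : ℝ) - (s + t + 1 : ℕ) + 1 = -(t : ℝ) := by push_cast; ring
    rw [hΓ, Real.Gamma_neg_nat_eq_zero, mul_zero, zero_mul, div_zero, mul_zero]
    refine Finset.sum_eq_zero fun l hl => ?_
    have hl := Finset.mem_range.1 hl
    rw [Nat.descFactorial_of_lt (by omega)]
    simp

/-- Series representation of `∫_0^1 x^{-μ}(1-x)^s/(ζ^{-1}+x)^n dx` (up to a factor, the
Gauss hypergeometric function `₂F₁(n, 1−μ; s−μ+2; −ζ)`) for positive integers `n`, `s`,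
`0 < μ < 1` and `ζ > 1`. The Pochhammer symbol `(μ)_k` is `∏_{i<k}(μ+i)`; the factorial
`(s-n+k+1)!`, whose argument may be negative, is written as `Γ(s-n+k+2)` (Mathlib's
`Real.Gamma` vanishes at nonpositive integers, making those terms zero);
`(1+ζ^{-1})^{s-n+k+1}` is an integer power. -/
theorem stmt_18 (n s : ℕ) (hn : 1 ≤ n) (hs : 1 ≤ s)
    (μ : ℝ) (hμ0 : 0 < μ) (hμ1 : μ < 1) (ζ : ℝ) (hζ : 1 < ζ) :
    ∃ A : ℝ,
      HasSum (fun k : ℕ =>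
        (-1 : ℝ) ^ k * (Nat.choose (n + k - 1) k : ℝ) * ζ⁻¹ ^ k *
          ∑ l ∈ Finset.range (s + 1),
            (-1 : ℝ) ^ l * (Nat.factorial s : ℝ) /
              ((Nat.factorial l : ℝ) * (Nat.factorial (s - l) : ℝ) *
                ((l : ℝ) - n - k - μ + 1))) A ∧
      (∫ x in (0 : ℝ)..1, x ^ (-μ) * (1 - x) ^ s / (ζ⁻¹ + x) ^ n) =
        A + (-1 : ℝ) ^ (n - 1) * (Real.pi * (Nat.factorial s : ℝ) /
            Real.sin (Real.pi * μ)) *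
          ∑ k ∈ Finset.range n,
            (-1 : ℝ) ^ k * (∏ i ∈ Finset.range k, (μ + (i : ℝ))) *
              (1 + ζ⁻¹) ^ ((s : ℤ) - (n : ℤ) + (k : ℤ) + 1) * ζ ^ ((k : ℝ) + μ) /
              ((Nat.factorial k : ℝ) * Real.Gamma ((s : ℝ) - n + k + 2) *
                (Nat.factorial (n - k - 1) : ℝ)) := by
  obtain ⟨m, rfl⟩ := Nat.exists_eq_add_of_le' hn
  set a := ζ⁻¹ with ha
  have ha0 : 0 < a := by positivity
  have ha1 : a < 1 := inv_lt_one_of_one_lt₀ hζ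
  have hζa : ζ = a⁻¹ := by rw [ha, inv_inv]
  have hJ := hasSum_sum (s := Finset.range (s + 1)) fun l _ =>
    (hasSum_integral_rpow_div_add_pow hμ0 hμ1 ha0 ha1 l m).mul_left ((-1) ^ l * (s.choose l : ℝ))
  refine ⟨_, (congrArg (HasSum · _ _) (funext fun k => ?_)).mp hJ, ?_⟩
  · symm
    rw [Finset.mul_sum]
    refine Finset.sum_congr rfl fun l hl => ?_
    have hl : l ≤ s := Nat.lt_succ_iff.1 (Finset.mem_range.1 hl)
    rw [Nat.cast_choose ℝ hl, show m + 1 + k - 1 = m + k by omega,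
      show (l : ℝ) - (m + 1 : ℕ) - k - μ + 1 = l - μ - m - k by push_cast; ring]
    field_simp
  · have h_int (l : ℕ) := intervalIntegrable_rpow_div_add_pow (p := (l : ℝ) - μ) (a := a)
      (by linarith [(l.cast_nonneg : (0 : ℝ) ≤ l)]) ha0 (m + 1)
    have hexp : (∫ x in (0 : ℝ)..1, x ^ (-μ) * (1 - x) ^ s / (a + x) ^ (m + 1)) =
        ∑ l ∈ Finset.range (s + 1), (-1) ^ l * (s.choose l : ℝ) *
          ∫ x in (0 : ℝ)..1, x ^ ((l : ℝ) - μ) / (a + x) ^ (m + 1) := by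
      simp_rw [← intervalIntegral.integral_const_mul]
      rw [← intervalIntegral.integral_finsetSum fun l _ => (h_int l).const_mul _]
      refine intervalIntegral.integral_congr_ae (Eventually.of_forall fun x hx => ?_)
      rw [uIoc_of_le zero_le_one] at hx
      rw [sub_eq_neg_add, add_pow, Finset.mul_sum, Finset.sum_div]
      refine Finset.sum_congr rfl fun l _ => ?_
      rw [sub_eq_neg_add (l : ℝ), Real.rpow_add_natCast hx.1.ne', neg_pow x, one_pow]
      ring
    have hR := sum_choose_mul_rpow_mul_prod μ ha0 s m
    have hterm (k : ℕ) : m + 1 - k - 1 = m - k := by omega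
    have hz (k : ℕ) : (s : ℤ) - (m + 1 : ℕ) + k + 1 = s - m + k := by push_cast; ring
    have hg (k : ℕ) : (s : ℝ) - (m + 1 : ℕ) + k + 2 = s - m + k + 1 := by push_cast; ring
    simp_rw [hterm, hz, hg, hζa, Nat.add_sub_cancel]
    have hfin : ∑ l ∈ Finset.range (s + 1), (-1 : ℝ) ^ l * (s.choose l : ℝ) *
          ((-1) ^ l * (Real.pi / Real.sin (Real.pi * μ)) * a ^ ((l : ℝ) - μ - m) *
            (∏ i ∈ Finset.range m, (μ - l + i)) / m.factorial) =
        Real.pi / Real.sin (Real.pi * μ) * ∑ l ∈ Finset.range (s + 1), (s.choose l : ℝ) *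
          (a ^ ((l : ℝ) - μ - m) * (∏ i ∈ Finset.range m, (μ - l + i)) / m.factorial) := by
      rw [Finset.mul_sum]
      refine Finset.sum_congr rfl fun l _ => ?_
      have h1 : (-1 : ℝ) ^ l * (-1) ^ l = 1 := by rw [← mul_pow]; simp
      linear_combination (Real.pi / Real.sin (Real.pi * μ) * (s.choose l : ℝ) *
        (a ^ ((l : ℝ) - μ - m) * (∏ i ∈ Finset.range m, (μ - l + i)) / m.factorial)) * h1
    rw [hexp]
    simp_rw [mul_sub]
    rw [Finset.sum_sub_distrib, hfin, hR]
    ring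
end

section
/- Let 0 < a < 1, let n ≥ 1 be an integer and let ω > 0. Then ∫_0^∞ e^{-x} x^{a-1}/(ω + x)^n dx = ((-1)^n π/(sin(πa) (n-1)!)) Σ_{k=0}^{∞} ((n+k-1)!/(Γ(n+k+1-a) k!)) ω^k + (-1)^{n+1} Γ(a) e^{ω} ω^{a-1} Σ_{k=0}^{n-1} (-1)^k Γ(k+1-a)/(k! (n-1-k)! ω^k), where Γ is the Gamma function and the infinite series converges. -/
open Filter MeasureTheory Set

/-- The exponential generating function `∑ c k * w ^ k / k!` converges when `c` is bounded. -/
theorem summable_expGenFun {c : ℕ → ℝ} {C : ℝ} (hc : ∀ k, |c k| ≤ C) (w : ℝ) :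
    Summable fun k : ℕ => c k / (k.factorial : ℝ) * w ^ k := by
  refine Summable.of_norm_bounded ((Real.summable_pow_div_factorial |w|).mul_left C) fun k => ?_
  rw [Real.norm_eq_abs, abs_mul, abs_div, abs_pow, Nat.abs_cast, div_mul_eq_mul_div, mul_div_assoc]
  gcongr
  exact hc k

/-- Differentiating an exponential generating function shifts its coefficients. -/
theorem hasDerivAt_expGenFun {c : ℕ → ℝ} {C : ℝ} (hc : ∀ k, |c k| ≤ C) (w : ℝ) :
    HasDerivAt (fun z => ∑' k : ℕ, c k / (k.factorial : ℝ) * z ^ k)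
      (∑' k : ℕ, c (k + 1) / (k.factorial : ℝ) * w ^ k) w := by
  have hshift (k : ℕ) (x : ℝ) : x / ((k + 1).factorial : ℝ) * ((k + 1 : ℕ) : ℝ) =
      x / (k.factorial : ℝ) := by
    rw [Nat.factorial_succ]
    have : (k.factorial : ℝ) ≠ 0 := by positivity
    push_cast
    field_simp
  set R : ℝ := |w| + 1 with hR
  have hC : 0 ≤ C := (abs_nonneg _).trans (hc 0)
  have hu : Summable fun k : ℕ => C / (k.factorial : ℝ) * (k * R ^ (k - 1)) := by
    rw [← summable_nat_add_iff 1]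
    refine ((Real.summable_pow_div_factorial R).mul_left C).congr fun k => ?_
    rw [← mul_assoc, hshift, Nat.add_sub_cancel]
    ring
  have hbound (k : ℕ) (y : ℝ) (hy : y ∈ Metric.ball (0 : ℝ) R) :
      ‖c k / (k.factorial : ℝ) * (k * y ^ (k - 1))‖ ≤
        C / (k.factorial : ℝ) * (k * R ^ (k - 1)) := by
    have hy' : |y| ≤ R := by simpa using (mem_ball_zero_iff.1 hy).le
    rw [Real.norm_eq_abs, abs_mul, abs_div, abs_mul, abs_pow, Nat.abs_cast, Nat.abs_cast]
    gcongr
    exact hc k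
  have hw : w ∈ Metric.ball (0 : ℝ) R := by simp [hR]
  have key := hasDerivAt_tsum_of_isPreconnected
    (g := fun (k : ℕ) z => c k / (k.factorial : ℝ) * z ^ k)
    (g' := fun (k : ℕ) z => c k / (k.factorial : ℝ) * (k * z ^ (k - 1))) hu Metric.isOpen_ball
    (convex_ball (0 : ℝ) R).isPreconnected
    (fun k y _ => (hasDerivAt_pow k y).const_mul _) hbound hw (summable_expGenFun hc w) hw
  refine key.congr_deriv ?_
  rw [(Summable.of_norm_bounded hu fun k => hbound k w hw).tsum_eq_zero_add]
  simp only [Nat.cast_zero, zero_mul, mul_zero, zero_add, ← mul_assoc, hshift, Nat.add_sub_cancel]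

/-- The ratio `m! / Γ(m + 2 - a)`. -/
noncomputable def gammaRatio (a : ℝ) (m : ℕ) : ℝ :=
  (m.factorial : ℝ) / Real.Gamma (m + 2 - a)

theorem gammaRatio_pos {a : ℝ} (ha : a < 1) (m : ℕ) : 0 < gammaRatio a m := by
  have hm : (0 : ℝ) ≤ m := m.cast_nonneg
  have := Real.Gamma_pos_of_pos (show 0 < (m : ℝ) + 2 - a by linarith)
  unfold gammaRatio
  positivity

theorem antitone_gammaRatio {a : ℝ} (ha : a < 1) : Antitone (gammaRatio a) := by
  refine antitone_nat_of_succ_le fun m => ?_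
  have hm : (0 : ℝ) ≤ m := m.cast_nonneg
  have hpos : 0 < (m : ℝ) + 2 - a := by linarith
  have hG := Real.Gamma_pos_of_pos hpos
  have hstep : gammaRatio a (m + 1) = (m + 1) / (m + 2 - a) * gammaRatio a m := by
    unfold gammaRatio
    rw [show ((m + 1 : ℕ) : ℝ) + 2 - a = (m + 2 - a) + 1 by push_cast; ring,
      Real.Gamma_add_one hpos.ne', Nat.factorial_succ]
    push_cast
    field_simp
  rw [hstep]
  exact mul_le_of_le_one_left (gammaRatio_pos ha m).le ((div_le_one hpos).2 (by linarith))

theorem abs_gammaRatio_add_le {a : ℝ} (ha : a < 1) (m k : ℕ) :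
    |gammaRatio a (m + k)| ≤ gammaRatio a m := by
  rw [abs_of_pos (gammaRatio_pos ha _)]
  exact antitone_gammaRatio ha (Nat.le_add_right m k)

/-- The series `∑ (m + k)! / (Γ(m + k + 2 - a) k!) w ^ k`. -/
noncomputable def kummerSeries (a : ℝ) (m : ℕ) (w : ℝ) : ℝ :=
  ∑' k : ℕ, gammaRatio a (m + k) / (k.factorial : ℝ) * w ^ k

theorem hasSum_kummerSeries {a : ℝ} (ha : a < 1) (m : ℕ) (w : ℝ) :
    HasSum (fun k : ℕ => gammaRatio a (m + k) / (k.factorial : ℝ) * w ^ k) (kummerSeries a m w) :=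
  (summable_expGenFun (abs_gammaRatio_add_le ha m) w).hasSum

theorem hasDerivAt_kummerSeries {a : ℝ} (ha : a < 1) (m : ℕ) (w : ℝ) :
    HasDerivAt (kummerSeries a m) (kummerSeries a (m + 1) w) w := by
  refine (hasDerivAt_expGenFun (abs_gammaRatio_add_le ha m) w).congr_deriv ?_
  simp only [kummerSeries, add_assoc, add_comm 1]

/-- The first order differential equation satisfied by `kummerSeries a 0`. -/
theorem kummerSeries_zero_ode {a : ℝ} (ha : a < 1) (w : ℝ) :
    (1 - a) * kummerSeries a 0 w + w * kummerSeries a 1 w - w * kummerSeries a 0 w =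
      1 / Real.Gamma (1 - a) := by
  have h0 := hasSum_kummerSeries ha 0 w
  have h1 : HasSum (fun k : ℕ => (k : ℝ) * (gammaRatio a k / (k.factorial : ℝ) * w ^ k))
      (w * kummerSeries a 1 w) := by
    rw [← hasSum_nat_add_iff' 1]
    simp only [Finset.range_one, Finset.sum_singleton, Nat.cast_zero, zero_mul, sub_zero]
    refine ((hasSum_kummerSeries ha 1 w).mul_left w).congr_fun fun k => ?_
    rw [add_comm 1 k, Nat.factorial_succ, pow_succ]
    have : (k.factorial : ℝ) ≠ 0 := by positivity
    push_cast
    field_simp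
  have h2 : HasSum (fun k : ℕ => ((k : ℝ) + 1 - a) * (gammaRatio a k / (k.factorial : ℝ) * w ^ k))
      (w * kummerSeries a 0 w + 1 / Real.Gamma (1 - a)) := by
    have hfun (k : ℕ) : ((k : ℝ) + 1 - a) * (gammaRatio a k / (k.factorial : ℝ) * w ^ k) =
        w ^ k / Real.Gamma (k + 1 - a) := by
      have hk : (0 : ℝ) ≤ k := k.cast_nonneg
      have hpos : 0 < (k : ℝ) + 1 - a := by linarith
      have := Real.Gamma_pos_of_pos hpos
      rw [gammaRatio, show (k : ℝ) + 2 - a = (k + 1 - a) + 1 by ring,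
        Real.Gamma_add_one hpos.ne']
      field_simp
    simp only [hfun]
    rw [← hasSum_nat_add_iff' 1]
    simp only [Finset.range_one, Finset.sum_singleton, Nat.cast_zero, zero_add, pow_zero,
      add_sub_cancel_right]
    refine (h0.mul_left w).congr_fun fun k => ?_
    rw [zero_add, gammaRatio, pow_succ,
      show ((k + 1 : ℕ) : ℝ) + 1 - a = k + 2 - a by push_cast; ring]
    field_simp
  have h3 := (h0.mul_left (1 - a)).add h1
  simp only [zero_add] at h3
  have := h3.unique (h2.congr_fun fun k => by ring)
  linarith

/-- The sum `e ^ w ∑ (-1) ^ k Γ(k + 1 - a) / (k! (m - k)!) w ^ (a - 1 - k)` over `k ≤ m`. -/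
noncomputable def kummerFiniteSum (a : ℝ) (m : ℕ) (w : ℝ) : ℝ :=
  Real.exp w * ∑ k ∈ Finset.range (m + 1), (-1 : ℝ) ^ k * Real.Gamma (k + 1 - a) /
    ((k.factorial : ℝ) * ((m - k).factorial : ℝ)) * w ^ (a - 1 - k)

theorem hasDerivAt_kummerFiniteSum {a : ℝ} (ha : a < 1) (m : ℕ) {w : ℝ} (hw : 0 < w) :
    HasDerivAt (kummerFiniteSum a m) ((m + 1) * kummerFiniteSum a (m + 1) w) w := by
  have hd := (Real.hasDerivAt_exp w).mul (HasDerivAt.fun_sum (u := Finset.range (m + 1))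
    fun k _ => (Real.hasDerivAt_rpow_const (p := a - 1 - k) (Or.inl hw.ne')).const_mul
      ((-1 : ℝ) ^ k * Real.Gamma (k + 1 - a) / ((k.factorial : ℝ) * ((m - k).factorial : ℝ))))
  refine hd.congr_deriv ?_
  have e1 : ∑ k ∈ Finset.range (m + 1), (-1 : ℝ) ^ k * Real.Gamma (k + 1 - a) /
      ((k.factorial : ℝ) * ((m - k).factorial : ℝ)) * w ^ (a - 1 - k) =
      ∑ k ∈ Finset.range (m + 2), ((m : ℝ) + 1 - k) * ((-1 : ℝ) ^ k * Real.Gamma (k + 1 - a) /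
      ((k.factorial : ℝ) * ((m + 1 - k).factorial : ℝ)) * w ^ (a - 1 - k)) := by
    rw [Finset.sum_range_succ _ (m + 1)]
    simp only [Nat.cast_add, Nat.cast_one, sub_self, zero_mul, add_zero]
    refine Finset.sum_congr rfl fun k hk => ?_
    obtain ⟨j, rfl⟩ := Nat.exists_eq_add_of_le (Nat.lt_succ_iff.1 (Finset.mem_range.1 hk))
    rw [Nat.add_sub_cancel_left, show k + j + 1 - k = j + 1 by omega, Nat.factorial_succ]
    have : (j : ℝ) + 1 ≠ 0 := by positivity
    push_cast
    rw [show (k : ℝ) + j + 1 - k = j + 1 by ring]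
    field_simp
  have e2 : ∑ k ∈ Finset.range (m + 1), (-1 : ℝ) ^ k * Real.Gamma (k + 1 - a) /
      ((k.factorial : ℝ) * ((m - k).factorial : ℝ)) * ((a - 1 - k) * w ^ (a - 1 - k - 1)) =
      ∑ k ∈ Finset.range (m + 2), (k : ℝ) * ((-1 : ℝ) ^ k * Real.Gamma (k + 1 - a) /
      ((k.factorial : ℝ) * ((m + 1 - k).factorial : ℝ)) * w ^ (a - 1 - k)) := by
    rw [Finset.sum_range_succ' _ (m + 1)]
    simp only [Nat.cast_zero, zero_mul, add_zero]
    refine Finset.sum_congr rfl fun k _ => ?_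
    have hk : (0 : ℝ) ≤ k := k.cast_nonneg
    rw [Nat.add_sub_add_right, Nat.factorial_succ, pow_succ]
    push_cast
    rw [show (k : ℝ) + 1 + 1 - a = (k + 1 - a) + 1 by ring,
      Real.Gamma_add_one (show (k : ℝ) + 1 - a ≠ 0 from (by linarith : 0 < (k : ℝ) + 1 - a).ne'),
      show a - 1 - ((k : ℝ) + 1) = a - 1 - k - 1 by ring]
    field_simp
    ring
  rw [e1, e2, ← mul_add, ← Finset.sum_add_distrib, kummerFiniteSum, mul_left_comm,
    Finset.mul_sum (a := (m : ℝ) + 1)]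
  congr 1
  refine Finset.sum_congr rfl fun k _ => ?_
  ring

/-- The integral `∫ e ^ (-x) x ^ (a - 1) / (w + x) ^ (m + 1)` over the positive half-line. -/
noncomputable def kummerIntegral (a : ℝ) (m : ℕ) (w : ℝ) : ℝ :=
  ∫ x in Ioi (0 : ℝ), Real.exp (-x) * x ^ (a - 1) / (w + x) ^ (m + 1)

theorem hasDerivAt_kummerIntegral {a : ℝ} (ha : 0 < a) (m : ℕ) {w : ℝ} (hw : 0 < w) :
    HasDerivAt (kummerIntegral a m) (-(m + 1) * kummerIntegral a (m + 1) w) w := by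
  have hΓ := Real.GammaIntegral_convergent ha
  have hmeas (v : ℝ) (j : ℕ) : AEStronglyMeasurable
      (fun x : ℝ => Real.exp (-x) * x ^ (a - 1) / (v + x) ^ j) (volume.restrict (Ioi 0)) :=
    Measurable.aestronglyMeasurable (by fun_prop)
  have hle (v : ℝ) (hv : 0 < v) (u : ℝ) (hu : v ≤ u) (j : ℕ) (x : ℝ) (hx : 0 < x) :
      |Real.exp (-x) * x ^ (a - 1) / (u + x) ^ j| ≤ Real.exp (-x) * x ^ (a - 1) / v ^ j := by
    have hux : 0 < u + x := by linarith
    rw [abs_of_nonneg (by positivity)]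
    gcongr
    linarith
  have hint : Integrable (fun x : ℝ => Real.exp (-x) * x ^ (a - 1) / (w + x) ^ (m + 1))
      (volume.restrict (Ioi 0)) :=
    Integrable.mono' (hΓ.div_const (w ^ (m + 1))) (hmeas w _)
      (ae_restrict_of_forall_mem measurableSet_Ioi fun x hx => hle w hw w le_rfl _ x hx)
  have key := hasDerivAt_integral_of_dominated_loc_of_deriv_le
    (μ := volume.restrict (Ioi (0 : ℝ))) (𝕜 := ℝ) (x₀ := w) (s := Ioi (w / 2))
    (F := fun v x => Real.exp (-x) * x ^ (a - 1) / (v + x) ^ (m + 1))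
    (F' := fun v x => -(m + 1) * (Real.exp (-x) * x ^ (a - 1) / (v + x) ^ (m + 1 + 1)))
    (bound := fun x => (m + 1) * (Real.exp (-x) * x ^ (a - 1) / (w / 2) ^ (m + 1 + 1)))
    (Ioi_mem_nhds (by linarith)) (Eventually.of_forall fun v => hmeas v _) hint
    ((hmeas w _).const_mul _)
    (ae_restrict_of_forall_mem measurableSet_Ioi fun x hx v hv => ?_)
    ((hΓ.div_const _).const_mul _)
    (ae_restrict_of_forall_mem measurableSet_Ioi fun x hx v hv => ?_)
  · refine key.2.congr_deriv ?_
    rw [integral_const_mul, kummerIntegral]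
  · rw [Real.norm_eq_abs, abs_mul, abs_neg, abs_of_pos (by positivity : (0 : ℝ) < m + 1)]
    gcongr
    exact hle _ (by linarith) v (le_of_lt hv) _ x hx
  · have hv' : w / 2 < v := hv
    have hx' : 0 < x := hx
    have hvx : v + x ≠ 0 := by linarith
    have h := ((((hasDerivAt_id v).add_const x).fun_pow (m + 1)).fun_inv
      (pow_ne_zero _ hvx)).const_mul (Real.exp (-x) * x ^ (a - 1))
    simp only [id, ← div_eq_mul_inv] at h
    refine h.congr_deriv ?_
    rw [Nat.add_sub_cancel]
    push_cast
    field_simp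
    ring

/-- The integral `∫ e ^ (-w (1 + y)) y ^ (a - 1) / (1 + y)` over the positive half-line. -/
noncomputable def scaledKummerIntegral (a : ℝ) (w : ℝ) : ℝ :=
  ∫ y in Ioi (0 : ℝ), Real.exp (-(w * (1 + y))) * y ^ (a - 1) / (1 + y)

theorem kummerIntegral_zero_eq_scaled (a : ℝ) {w : ℝ} (hw : 0 < w) :
    kummerIntegral a 0 w = w ^ (a - 1) * Real.exp w * scaledKummerIntegral a w := by
  have h := integral_comp_mul_left_Ioi
    (fun x => Real.exp (-x) * x ^ (a - 1) / (w + x) ^ (0 + 1)) 0 hw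
  rw [mul_zero, smul_eq_mul, eq_inv_mul_iff_mul_eq₀ hw.ne'] at h
  rw [kummerIntegral, ← h, scaledKummerIntegral, ← integral_const_mul, ← integral_const_mul]
  refine setIntegral_congr_fun measurableSet_Ioi fun y hy => ?_
  have hy' : 0 < y := hy
  simp only [zero_add, pow_one]
  rw [Real.mul_rpow hw.le hy'.le, show -(w * y) = w + -(w * (1 + y)) by ring, Real.exp_add]
  field_simp

theorem integrableOn_rpow_mul_exp_neg_mul_one_add {a w : ℝ} (ha : 0 < a) (hw : 0 < w) :
    IntegrableOn (fun y : ℝ => Real.exp (-(w * (1 + y))) * y ^ (a - 1)) (Ioi 0) := by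
  have h := integrableOn_rpow_mul_exp_neg_mul_rpow (p := 1) (s := a - 1) (by linarith) one_pos hw
  refine IntegrableOn.congr_fun (h.const_mul (Real.exp (-w))) (fun y _ => ?_) measurableSet_Ioi
  simp only [Real.rpow_one]
  rw [show -(w * (1 + y)) = -w + -w * y by ring, Real.exp_add]
  ring

theorem integral_rpow_mul_exp_neg_mul_one_add {a w : ℝ} (ha : 0 < a) (hw : 0 < w) :
    ∫ y in Ioi (0 : ℝ), Real.exp (-(w * (1 + y))) * y ^ (a - 1) =
      Real.exp (-w) * w ^ (-a) * Real.Gamma a := by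
  rw [Real.rpow_neg hw.le, ← Real.inv_rpow hw.le, ← one_div, mul_assoc,
    ← Real.integral_rpow_mul_exp_neg_mul_Ioi ha hw, ← integral_const_mul]
  refine setIntegral_congr_fun measurableSet_Ioi fun y _ => ?_
  rw [show -(w * (1 + y)) = -w + -(w * y) by ring, Real.exp_add]
  ring

theorem hasDerivAt_scaledKummerIntegral {a w : ℝ} (ha : 0 < a) (hw : 0 < w) :
    HasDerivAt (scaledKummerIntegral a) (-(Real.exp (-w) * w ^ (-a) * Real.Gamma a)) w := by
  have hint := integrableOn_rpow_mul_exp_neg_mul_one_add ha hw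
  have key := hasDerivAt_integral_of_dominated_loc_of_deriv_le
    (μ := volume.restrict (Ioi (0 : ℝ))) (𝕜 := ℝ) (x₀ := w) (s := Ioi (w / 2))
    (F := fun v y => Real.exp (-(v * (1 + y))) * y ^ (a - 1) / (1 + y))
    (F' := fun v y => -(Real.exp (-(v * (1 + y))) * y ^ (a - 1)))
    (bound := fun y => Real.exp (-(w / 2 * (1 + y))) * y ^ (a - 1))
    (Ioi_mem_nhds (by linarith))
    (Eventually.of_forall fun v => Measurable.aestronglyMeasurable (by fun_prop))
    (hint.mono' (Measurable.aestronglyMeasurable (by fun_prop))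
      (ae_restrict_of_forall_mem measurableSet_Ioi fun y hy => ?_))
    (Measurable.aestronglyMeasurable (by fun_prop))
    (ae_restrict_of_forall_mem measurableSet_Ioi fun y hy v hv => ?_)
    (integrableOn_rpow_mul_exp_neg_mul_one_add ha (half_pos hw))
    (ae_restrict_of_forall_mem measurableSet_Ioi fun y hy v _ => ?_)
  · refine key.2.congr_deriv ?_
    rw [integral_neg, integral_rpow_mul_exp_neg_mul_one_add ha hw]
  · have hy' : 0 < y := hy
    rw [Real.norm_eq_abs, abs_of_nonneg (by positivity)]
    exact div_le_self (by positivity) (by linarith)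
  · have hy' : 0 < y := hy
    rw [Real.norm_eq_abs, abs_neg, abs_of_nonneg (by positivity)]
    gcongr
    exact le_of_lt hv
  · have hy' : 0 < y := hy
    have h := ((((hasDerivAt_id v).mul_const (1 + y)).fun_neg.exp).mul_const
      (y ^ (a - 1))).div_const (1 + y)
    simp only [id] at h
    refine h.congr_deriv ?_
    field_simp

theorem tendsto_scaledKummerIntegral {a : ℝ} (ha : 0 < a) :
    Tendsto (scaledKummerIntegral a) atTop (nhds 0) := by
  have hlim : Tendsto (fun w : ℝ => Real.exp (-w) * w ^ (-a) * Real.Gamma a) atTop (nhds 0) := by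
    simpa using ((Real.tendsto_exp_neg_atTop_nhds_zero.mul (tendsto_rpow_neg_atTop ha)).mul_const
      (Real.Gamma a))
  refine tendsto_of_tendsto_of_tendsto_of_le_of_le' tendsto_const_nhds hlim
    (Eventually.of_forall fun w => ?_) ?_
  · refine setIntegral_nonneg measurableSet_Ioi fun y hy => ?_
    have hy' : 0 < y := hy
    positivity
  · filter_upwards [eventually_gt_atTop 0] with w hw
    rw [← integral_rpow_mul_exp_neg_mul_one_add ha hw]
    refine integral_mono_of_nonneg
      (ae_restrict_of_forall_mem measurableSet_Ioi fun y hy => ?_)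
      (integrableOn_rpow_mul_exp_neg_mul_one_add ha hw)
      (ae_restrict_of_forall_mem measurableSet_Ioi fun y hy => ?_)
    · have hy' : 0 < y := hy
      simp only [Pi.zero_apply]
      positivity
    · have hy' : 0 < y := hy
      exact div_le_self (by positivity) (by linarith)

/-- The function `w ^ (1 - a) e ^ (-w) kummerSeries a 0 w` is the regularized lower incomplete Gamma
function `γ(1 - a, w) / Γ(1 - a)`; this is its derivative. -/
theorem hasDerivAt_rpow_mul_exp_neg_mul_kummerSeries {a w : ℝ} (ha : a < 1) (hw : 0 < w) :
    HasDerivAt (fun v => v ^ (1 - a) * Real.exp (-v) * kummerSeries a 0 v)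
      (Real.exp (-w) * w ^ (-a) / Real.Gamma (1 - a)) w := by
  have h := ((Real.hasDerivAt_rpow_const (p := 1 - a) (Or.inl hw.ne')).fun_mul
    (hasDerivAt_id w).fun_neg.exp).fun_mul (hasDerivAt_kummerSeries ha 0 w)
  refine h.congr_deriv ?_
  rw [div_eq_mul_one_div, ← kummerSeries_zero_ode ha w, show 1 - a - 1 = -a by ring,
    show 1 - a = -a + 1 by ring, Real.rpow_add_one hw.ne']
  simp only [id]
  ring

theorem tendsto_rpow_mul_exp_neg_mul_kummerSeries {a : ℝ} (ha : a < 1) :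
    Tendsto (fun v => v ^ (1 - a) * Real.exp (-v) * kummerSeries a 0 v) atTop (nhds 1) := by
  have hpos : 0 < 1 - a := by linarith
  have hΓ := Real.Gamma_pos_of_pos hpos
  have hint : IntegrableOn (fun x : ℝ => Real.exp (-x) * x ^ (-a) / Real.Gamma (1 - a))
      (Ioi 0) := by
    have := (Real.GammaIntegral_convergent hpos).div_const (Real.Gamma (1 - a))
    rwa [show 1 - a - 1 = -a by ring] at this
  have hlim := intervalIntegral_tendsto_integral_Ioi 0 hint tendsto_id
  have hval : ∫ x in Ioi (0 : ℝ), Real.exp (-x) * x ^ (-a) / Real.Gamma (1 - a) = 1 := by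
    rw [integral_div, show -a = 1 - a - 1 by ring, ← Real.Gamma_eq_integral hpos,
      div_self hΓ.ne']
  rw [hval] at hlim
  refine hlim.congr' ?_
  filter_upwards [eventually_ge_atTop 0] with v hv
  rw [id, intervalIntegral.integral_eq_sub_of_hasDerivAt_of_le hv
    (f := fun v => v ^ (1 - a) * Real.exp (-v) * kummerSeries a 0 v)]
  · rw [Real.zero_rpow hpos.ne']
    ring
  · refine Continuous.continuousOn ?_
    have h1 : Continuous (kummerSeries a 0) :=
      continuous_iff_continuousAt.2 fun z => (hasDerivAt_kummerSeries ha 0 z).continuousAt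
    have h2 : Continuous fun v : ℝ => v ^ (1 - a) := Real.continuous_rpow_const hpos.le
    fun_prop
  · exact fun x hx => hasDerivAt_rpow_mul_exp_neg_mul_kummerSeries ha hx.1
  · exact (intervalIntegrable_iff_integrableOn_Ioc_of_le hv).2 (hint.mono_set Ioc_subset_Ioi_self)

theorem scaledKummerIntegral_eq {a w : ℝ} (ha0 : 0 < a) (ha1 : a < 1) (hw : 0 < w) :
    scaledKummerIntegral a w = Real.pi / Real.sin (Real.pi * a) *
      (1 - w ^ (1 - a) * Real.exp (-w) * kummerSeries a 0 w) := by
  have hΓ := Real.Gamma_pos_of_pos (sub_pos.2 ha1)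
  have hd (v : ℝ) (hv : 0 < v) : HasDerivAt (fun v => scaledKummerIntegral a v -
      Real.Gamma a * Real.Gamma (1 - a) *
        (1 - v ^ (1 - a) * Real.exp (-v) * kummerSeries a 0 v)) 0 v := by
    refine ((hasDerivAt_scaledKummerIntegral ha0 hv).fun_sub
      (((hasDerivAt_rpow_mul_exp_neg_mul_kummerSeries ha1 hv).const_sub 1).const_mul
        _)).congr_deriv ?_
    field_simp
    ring
  have hlim := (tendsto_scaledKummerIntegral ha0).sub
    (((tendsto_rpow_mul_exp_neg_mul_kummerSeries ha1).const_sub 1).const_mul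
      (Real.Gamma a * Real.Gamma (1 - a)))
  rw [sub_self, mul_zero, sub_zero] at hlim
  have hconst := tendsto_const_nhds.congr' (f₁ := fun _ => scaledKummerIntegral a w -
      Real.Gamma a * Real.Gamma (1 - a) *
        (1 - w ^ (1 - a) * Real.exp (-w) * kummerSeries a 0 w)) (l₁ := atTop)
    (((eventually_gt_atTop (0 : ℝ)).mono fun v hv => isOpen_Ioi.is_const_of_deriv_eq_zero
      isPreconnected_Ioi (fun z hz => (hd z hz).differentiableAt.differentiableWithinAt)
      (fun z hz => (hd z hz).deriv) hw hv))
  rw [← Real.Gamma_mul_Gamma_one_sub]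
  exact sub_eq_zero.1 (tendsto_nhds_unique hconst hlim)

theorem kummerIntegral_eq {a : ℝ} (ha0 : 0 < a) (ha1 : a < 1) (m : ℕ) {w : ℝ} (hw : 0 < w) :
    kummerIntegral a m w =
      (-1) ^ (m + 1) * Real.pi / (Real.sin (Real.pi * a) * (m.factorial : ℝ)) *
        kummerSeries a m w + (-1) ^ m * Real.Gamma a * kummerFiniteSum a m w := by
  induction m generalizing w with
  | zero =>
    rw [kummerIntegral_zero_eq_scaled a hw, scaledKummerIntegral_eq ha0 ha1 hw, kummerFiniteSum]
    have hpow : w ^ (a - 1) * w ^ (1 - a) = 1 := by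
      rw [← Real.rpow_add hw]; simp
    have hexp : Real.exp w * Real.exp (-w) = 1 := by rw [← Real.exp_add]; simp
    simp only [zero_add, Finset.range_one, Finset.sum_singleton, pow_zero, pow_one,
      Nat.factorial_zero, Nat.cast_zero, Nat.cast_one, sub_zero, mul_one, one_mul, Nat.sub_self, div_one]
    linear_combination (-(Real.pi / Real.sin (Real.pi * a)) * kummerSeries a 0 w) *
      (Real.exp w * Real.exp (-w) * hpow + hexp) - Real.exp w * w ^ (a - 1) *
        Real.Gamma_mul_Gamma_one_sub a
  | succ m ih =>
    have hL := hasDerivAt_kummerIntegral ha0 m hw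
    have hR := ((hasDerivAt_kummerSeries ha1 m w).const_mul ((-1) ^ (m + 1) * Real.pi /
      (Real.sin (Real.pi * a) * (m.factorial : ℝ)))).fun_add
      ((hasDerivAt_kummerFiniteSum ha1 m hw).const_mul ((-1) ^ m * Real.Gamma a))
    have h := hL.unique (hR.congr_of_eventuallyEq ((eventually_gt_nhds hw).mono fun v hv => ih hv))
    have hm : (m : ℝ) + 1 ≠ 0 := by positivity
    refine mul_left_cancel₀ (neg_ne_zero.2 hm) (h.trans ?_)
    have hsin : Real.sin (Real.pi * a) ≠ 0 :=
      (Real.sin_pos_of_pos_of_lt_pi (by positivity) (by nlinarith [Real.pi_pos])).ne'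
    rw [Nat.factorial_succ]
    push_cast
    field_simp
    ring

/-- Series representation of `∫_0^∞ e^{-x} x^{a-1}/(ω+x)^n dx` (up to a factor, the
Kummer function `U(a, a−n+1, ω)`) for `0 < a < 1`, integer `n ≥ 1` and `ω > 0`. -/
theorem stmt_19 (a : ℝ) (ha0 : 0 < a) (ha1 : a < 1)
    (n : ℕ) (hn : 1 ≤ n) (ω : ℝ) (hω : 0 < ω) :
    ∃ A : ℝ,
      HasSum (fun k : ℕ =>
        ((Nat.factorial (n + k - 1) : ℝ) /
            (Real.Gamma ((n : ℝ) + k + 1 - a) * (Nat.factorial k : ℝ))) * ω ^ k) A ∧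
      (∫ x in Set.Ioi (0 : ℝ), Real.exp (-x) * x ^ (a - 1) / (ω + x) ^ n) =
        ((-1 : ℝ) ^ n * Real.pi /
            (Real.sin (Real.pi * a) * (Nat.factorial (n - 1) : ℝ))) * A +
        (-1 : ℝ) ^ (n + 1) * Real.Gamma a * Real.exp ω * ω ^ (a - 1) *
          ∑ k ∈ Finset.range n,
            (-1 : ℝ) ^ k * Real.Gamma ((k : ℝ) + 1 - a) /
              ((Nat.factorial k : ℝ) * (Nat.factorial (n - 1 - k) : ℝ) * ω ^ k) := by
  obtain ⟨m, rfl⟩ := Nat.exists_eq_add_of_le' hn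
  refine ⟨kummerSeries a m ω, ?_, ?_⟩
  · convert hasSum_kummerSeries ha1 m ω using 2 with k
    rw [gammaRatio, show m + 1 + k - 1 = m + k by omega,
      show ((m + 1 : ℕ) : ℝ) + k + 1 - a = ((m + k : ℕ) : ℝ) + 2 - a by push_cast; ring, div_div]
  · have h := kummerIntegral_eq ha0 ha1 m hω
    rw [kummerIntegral] at h
    rw [h, Nat.add_sub_cancel, kummerFiniteSum, pow_succ _ (m + 1), pow_succ _ m]
    have hsum : ∑ k ∈ Finset.range (m + 1), (-1 : ℝ) ^ k * Real.Gamma (k + 1 - a) /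
        ((k.factorial : ℝ) * ((m - k).factorial : ℝ)) * ω ^ (a - 1 - k) =
        ω ^ (a - 1) * ∑ k ∈ Finset.range (m + 1), (-1 : ℝ) ^ k * Real.Gamma (k + 1 - a) /
        ((k.factorial : ℝ) * ((m - k).factorial : ℝ) * ω ^ k) := by
      rw [Finset.mul_sum]
      refine Finset.sum_congr rfl fun k _ => ?_
      rw [Real.rpow_sub_natCast hω.ne']
      field_simp
    rw [hsum]
    ring
end
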